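/- arXiv:1710.04335 — 7 statements merged into one kernel-verified Lean document; each statement's English description precedes it below -/
import Mathlib

section
/- Let V be a real vector space and Z := V × Module.Dual ℝ V with the canonical symplectic bilinear form ω((x,p))((y,q)) := p(y) − q(x). Define the tangent-lift form ω̇ on Z × Z by ω̇((z,ż))((w,ẇ)) := ω(z)(ẇ) + ω(ż)(w). Define τ : Z × Z → (V × V) × Module.Dual ℝ (V × V) by τ((x,p),(ẋ,ṗ)) := ((x,ẋ), L(ṗ,p)), where L(ṗ,p) is the linear functional on V × V given by L(ṗ,p)(a,b) := ṗ(a) + p(b), and let Ω be the canonical symplectic bilinear form on (V × V) × Module.Dual ℝ (V × V), Ω((X,Ξ))((Y,Η)) := Ξ(Y) − Η(X). Then τ is a linear equivalence and Ω(τ(z))(τ(z')) = ω̇(z)(z') for all z, z' ∈ Z × Z. -/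
/-- Flat model of the Tulczyjew isomorphism `T(T*M) ≅ T*(TM)`:
`(V × V*) × (V × V*)` models `T(T*V)` with points `((x,p),(ẋ,pdot))`, `ω̇` is the
tangent lift of the canonical symplectic form `ω` of `T*V`, and
`τ((x,p),(ẋ,pdot)) = ((x,ẋ), L(pdot,p))` with `L(pdot,p)(a,b) = pdot(a) + p(b)` is a linear
equivalence onto `(V × V) × (V × V)*` carrying `ω̇` to the canonical symplectic
form `Ω`. -/
theorem tulczyjew_flat (V : Type*) [AddCommGroup V] [Module ℝ V] :
    let ω : (V × Module.Dual ℝ V) → (V × Module.Dual ℝ V) → ℝ := fun z w =>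
      z.2 w.1 - w.2 z.1
    let ωdot : ((V × Module.Dual ℝ V) × (V × Module.Dual ℝ V)) →
        ((V × Module.Dual ℝ V) × (V × Module.Dual ℝ V)) → ℝ := fun z w =>
      ω z.1 w.2 + ω z.2 w.1
    let L : Module.Dual ℝ V → Module.Dual ℝ V → Module.Dual ℝ (V × V) := fun pdot p =>
      pdot.comp (LinearMap.fst ℝ V V) + p.comp (LinearMap.snd ℝ V V)
    let τ : ((V × Module.Dual ℝ V) × (V × Module.Dual ℝ V)) →
        ((V × V) × Module.Dual ℝ (V × V)) := fun z =>
      ((z.1.1, z.2.1), L z.2.2 z.1.2)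
    let Ω : ((V × V) × Module.Dual ℝ (V × V)) →
        ((V × V) × Module.Dual ℝ (V × V)) → ℝ := fun X Y =>
      X.2 Y.1 - Y.2 X.1
    (∃ e : ((V × Module.Dual ℝ V) × (V × Module.Dual ℝ V)) ≃ₗ[ℝ]
        ((V × V) × Module.Dual ℝ (V × V)), ⇑e = τ) ∧
      ∀ z z', Ω (τ z) (τ z') = ωdot z z' := by
  intro ω ωdot L τ Ω
  refine ⟨⟨{ toFun := τ
             invFun := fun X =>
               ((X.1.1, X.2.comp (LinearMap.inr ℝ V V)),
                (X.1.2, X.2.comp (LinearMap.inl ℝ V V)))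
             map_add' := ?_
             map_smul' := ?_
             left_inv := ?_
             right_inv := ?_ }, rfl⟩, ?_⟩
  · rintro ⟨⟨x, p⟩, ⟨y, q⟩⟩ ⟨⟨x', p'⟩, ⟨y', q'⟩⟩
    refine Prod.ext rfl (LinearMap.ext fun a => ?_)
    simp only [τ, L, Prod.mk_add_mk, LinearMap.add_apply, LinearMap.comp_apply]
    ring
  · rintro c ⟨⟨x, p⟩, ⟨y, q⟩⟩
    refine Prod.ext rfl (LinearMap.ext fun a => ?_)
    simp [τ, L, mul_add]
  · rintro ⟨⟨x, p⟩, ⟨y, q⟩⟩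
    refine Prod.ext (Prod.ext rfl (LinearMap.ext fun a => ?_))
      (Prod.ext rfl (LinearMap.ext fun a => ?_)) <;> simp [τ, L]
  · rintro ⟨⟨x, y⟩, f⟩
    refine Prod.ext rfl (LinearMap.ext fun a => ?_)
    obtain ⟨a, b⟩ := a
    simp [τ, L, ← map_add]
  · rintro ⟨⟨x, p⟩, ⟨y, q⟩⟩ ⟨⟨x', p'⟩, ⟨y', q'⟩⟩
    simp only [Ω, τ, L, ωdot, ω, LinearMap.add_apply, LinearMap.comp_apply,
      LinearMap.fst_apply, LinearMap.snd_apply]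
    ring
end

section
/- Let V be a real vector space and Z := V × Module.Dual ℝ V with the symmetric bilinear pairing B((x,p))((y,q)) := p(y) + q(x). Define the tangent-lift form Ḃ on Z × Z by Ḃ((z,ż))((w,ẇ)) := B(z)(ẇ) + B(ż)(w). Define τ : Z × Z → (V × V) × Module.Dual ℝ (V × V) by τ((x,p),(ẋ,ṗ)) := ((x,ẋ), L(ṗ,p)), where L(ṗ,p)(a,b) := ṗ(a) + p(b), and let B₂ be the symmetric pairing on (V × V) × Module.Dual ℝ (V × V) given by B₂((X,Ξ))((Y,Η)) := Ξ(Y) + Η(X). Then τ is a linear equivalence and B₂(τ(z))(τ(z')) = Ḃ(z)(z') for all z, z' ∈ Z × Z. -/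
/-- Flat ungraded model of the identification `ΠT*(TM) ≅ T(ΠT*M)`: the odd
symplectic structure of an anticotangent bundle is modeled by the split symmetric
pairing `B` between positions and antimomenta on `V × V*`, `Ḃ` is its tangent lift
to `(V × V*) × (V × V*)` (which models `T(ΠT*V)`), and
`τ((x,p),(ẋ,ṗ)) = ((x,ẋ), L(ṗ,p))` is a linear equivalence carrying `Ḃ` to the
split symmetric pairing `B₂` on `(V × V) × (V × V)*`. -/
theorem odd_tulczyjew_flat (V : Type*) [AddCommGroup V] [Module ℝ V] :
    let B : (V × Module.Dual ℝ V) → (V × Module.Dual ℝ V) → ℝ := fun z w =>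
      z.2 w.1 + w.2 z.1
    let Bdot : ((V × Module.Dual ℝ V) × (V × Module.Dual ℝ V)) →
        ((V × Module.Dual ℝ V) × (V × Module.Dual ℝ V)) → ℝ := fun z w =>
      B z.1 w.2 + B z.2 w.1
    let L : Module.Dual ℝ V → Module.Dual ℝ V → Module.Dual ℝ (V × V) := fun pdot p =>
      pdot.comp (LinearMap.fst ℝ V V) + p.comp (LinearMap.snd ℝ V V)
    let τ : ((V × Module.Dual ℝ V) × (V × Module.Dual ℝ V)) →
        ((V × V) × Module.Dual ℝ (V × V)) := fun z =>
      ((z.1.1, z.2.1), L z.2.2 z.1.2)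
    let B₂ : ((V × V) × Module.Dual ℝ (V × V)) →
        ((V × V) × Module.Dual ℝ (V × V)) → ℝ := fun X Y =>
      X.2 Y.1 + Y.2 X.1
    (∃ e : ((V × Module.Dual ℝ V) × (V × Module.Dual ℝ V)) ≃ₗ[ℝ]
        ((V × V) × Module.Dual ℝ (V × V)), ⇑e = τ) ∧
      ∀ z z', B₂ (τ z) (τ z') = Bdot z z' := by
  intro B Bdot L τ B₂
  refine ⟨⟨{ toFun := τ
             map_add' := ?_
             map_smul' := ?_
             invFun := fun X =>
               ((X.1.1, X.2.comp (LinearMap.inr ℝ V V)),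
                (X.1.2, X.2.comp (LinearMap.inl ℝ V V)))
             left_inv := ?_
             right_inv := ?_ }, rfl⟩, ?_⟩
  · intro z w
    refine Prod.ext rfl (LinearMap.ext fun v => ?_)
    simp [τ, L]
    ring
  · intro c z
    refine Prod.ext rfl (LinearMap.ext fun v => ?_)
    simp [τ, L]
  · intro z
    refine Prod.ext (Prod.ext rfl (LinearMap.ext fun v => ?_))
      (Prod.ext rfl (LinearMap.ext fun v => ?_)) <;> simp [τ, L]
  · intro X
    refine Prod.ext rfl (LinearMap.ext fun v => ?_)
    simp [τ, L, ← map_add]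
  · intro z w
    simp [τ, L, B, Bdot, B₂]
    ring
end

section
/- Let Z be a real vector space and B : Z →ₗ[ℝ] Z →ₗ[ℝ] ℝ a bilinear form. For a submodule P ⊆ Z let orth_B(P) := {z ∈ Z | ∀ p ∈ P, B(p)(z) = 0}, and call P Lagrangian with respect to B if P = orth_B(P). Define the tangent-lift form Ḃ on Z × Z by Ḃ((z,ż))((w,ẇ)) := B(z)(ẇ) + B(ż)(w). If P is Lagrangian with respect to B, then the submodule P × P ⊆ Z × Z (Submodule.prod P P) is Lagrangian with respect to Ḃ. -/
/-- Flat linear model of the corollaries that for a Lagrangian submanifold `P` of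
`T*M` (resp. `ΠT*M`), the tangent bundle `TP` is a Lagrangian submanifold of
`T(T*M) = T*(TM)` (resp. `T(ΠT*M) = ΠT*(TM)`) with respect to the lifted symplectic
form: if a subspace `P ⊆ Z` equals its `B`-orthogonal, then `P × P ⊆ Z × Z` equals
its orthogonal with respect to the tangent lift `Ḃ((z,ż))((w,ẇ)) = B(z)(ẇ) + B(ż)(w)`. -/
theorem tangent_lift_lagrangian_flat {Z : Type*} [AddCommGroup Z] [Module ℝ Z]
    (B : Z →ₗ[ℝ] Z →ₗ[ℝ] ℝ) (P : Submodule ℝ Z)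
    (hP : ∀ z : Z, z ∈ P ↔ ∀ p ∈ P, B p z = 0) :
    let Bdot : Z × Z → Z × Z → ℝ := fun v w => B v.1 w.2 + B v.2 w.1
    ∀ v : Z × Z, v ∈ Submodule.prod P P ↔ ∀ u ∈ Submodule.prod P P, Bdot u v = 0 := by
  intro Bdot v
  constructor
  · rintro ⟨h1, h2⟩ u ⟨hu1, hu2⟩
    change B u.1 v.2 + B u.2 v.1 = 0
    rw [(hP v.2).1 h2 u.1 hu1, (hP v.1).1 h1 u.2 hu2, add_zero]
  · intro h
    refine ⟨(hP v.1).2 fun p hp => ?_, (hP v.2).2 fun p hp => ?_⟩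
    · have := h (0, p) ⟨P.zero_mem, hp⟩
      simpa [Bdot] using this
    · have := h (p, 0) ⟨hp, P.zero_mem⟩
      simpa [Bdot] using this
end

section
/- Let Z be a real vector space and B : Z →ₗ[ℝ] Z →ₗ[ℝ] ℝ a bilinear form. For a submodule P ⊆ Z let orth_B(P) := {z ∈ Z | ∀ p ∈ P, B(p)(z) = 0}, and call P Lagrangian with respect to B if P = orth_B(P). Define the parity-swap lift A_B on Z × Z by A_B((z,ż))((w,ẇ)) := B(z)(ẇ) − B(ż)(w). If P is Lagrangian with respect to B, then the submodule P × P ⊆ Z × Z (Submodule.prod P P) is Lagrangian with respect to A_B. -/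
/-- Flat linear model of the corollaries that for a Lagrangian submanifold `P` of
`ΠT*M` (resp. `T*M`), the antitangent bundle `ΠTP` is a Lagrangian submanifold of
`ΠT(ΠT*M) = T*(ΠTM)` (resp. `ΠT(T*M) = ΠT*(ΠTM)`) with respect to the induced
symplectic form `∂ω`: if a subspace `P ⊆ Z` equals its `B`-orthogonal, then
`P × P ⊆ Z × Z` equals its orthogonal with respect to the parity-swap lift
`A_B((z,ż))((w,ẇ)) = B(z)(ẇ) - B(ż)(w)`. -/
theorem parity_swap_lift_lagrangian_flat {Z : Type*} [AddCommGroup Z] [Module ℝ Z]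
    (B : Z →ₗ[ℝ] Z →ₗ[ℝ] ℝ) (P : Submodule ℝ Z)
    (hP : ∀ z : Z, z ∈ P ↔ ∀ p ∈ P, B p z = 0) :
    let A : Z × Z → Z × Z → ℝ := fun v w => B v.1 w.2 - B v.2 w.1
    ∀ v : Z × Z, v ∈ Submodule.prod P P ↔ ∀ u ∈ Submodule.prod P P, A u v = 0 := by
  intro A v
  constructor
  · rintro ⟨h1, h2⟩ u ⟨hu1, hu2⟩
    have e1 := (hP v.2).1 h2 u.1 hu1
    have e2 := (hP v.1).1 h1 u.2 hu2
    change B u.1 v.2 - B u.2 v.1 = 0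
    rw [e1, e2, sub_zero]
  · intro h
    refine ⟨(hP v.1).2 fun p hp => ?_, (hP v.2).2 fun p hp => ?_⟩
    · have e := h (0, p) ⟨P.zero_mem, hp⟩
      simpa [A] using e
    · have e := h (p, 0) ⟨hp, P.zero_mem⟩
      simpa [A] using e
end

section
/- Let E, F be real normed vector spaces and φ : E → F with ContDiff ℝ 2 φ. Define the tangent map Tφ : E × E → F × F by Tφ(x,v) := (φ(x), fderiv ℝ φ x v). For a differentiable map ψ : A → B between real normed spaces, define its cotangent-lift relation R_ψ ⊆ (B × (B →L[ℝ] ℝ)) × (A × (A →L[ℝ] ℝ)) by ((y,q),(x,p)) ∈ R_ψ iff y = ψ(x) and p(a) = q(fderiv ℝ ψ x a) for all a ∈ A. For ṗ, p ∈ E →L[ℝ] ℝ let L(ṗ,p) ∈ (E × E) →L[ℝ] ℝ be L(ṗ,p)(a,b) := ṗ(a) + p(b), and similarly for F. Then for all x, ẋ ∈ E, y, ẏ ∈ F, p, ṗ ∈ E →L[ℝ] ℝ and q, q̇ ∈ F →L[ℝ] ℝ: (((y,ẏ), L(q̇,q)), ((x,ẋ), L(ṗ,p))) ∈ R_{Tφ}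 if and only if [ y = φ(x), and p(a) = q(fderiv ℝ φ x a) for all a ∈ E, and ẏ = fderiv ℝ φ x ẋ, and ṗ(a) = q̇(fderiv ℝ φ x a) + q(fderiv ℝ (fun z => fderiv ℝ φ z ẋ) x a) for all a ∈ E ]. -/
/-- Flat version of the Proposition: for a smooth map `φ : M₁ → M₂`, the canonical
relation `R_{Tφ}` of the tangent map `Tφ : TM₁ → TM₂` is the tangent prolongation
`T R_φ` of the canonical relation `R_φ` of `φ`, under the Tulczyjew identification
`T*(TM) = T(T*M)` in which `ṗ` is conjugate to `x` and `p` is conjugate to `ẋ`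
(encoded by the functional `L(ṗ,p)(a,b) = ṗ(a) + p(b)`).  Membership of
`(((y,ẏ), L(q̇,q)), ((x,ẋ), L(ṗ,p)))` in the cotangent-lift relation of `Tφ` is
equivalent to: the base point lies in `R_φ` and the velocities satisfy the
linearized defining equations. -/
theorem tangent_of_map_relation_flat {E F : Type*}
    [NormedAddCommGroup E] [NormedSpace ℝ E]
    [NormedAddCommGroup F] [NormedSpace ℝ F]
    (φ : E → F) (hφ : ContDiff ℝ 2 φ)
    (x xdot : E) (y ydot : F) (p pdot : E →L[ℝ] ℝ) (q qdot : F →L[ℝ] ℝ) :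
    let Tφ : E × E → F × F := fun v => (φ v.1, fderiv ℝ φ v.1 v.2)
    let LE : (E →L[ℝ] ℝ) → (E →L[ℝ] ℝ) → ((E × E) →L[ℝ] ℝ) := fun u₁ u₂ =>
      u₁.comp (ContinuousLinearMap.fst ℝ E E) + u₂.comp (ContinuousLinearMap.snd ℝ E E)
    let LF : (F →L[ℝ] ℝ) → (F →L[ℝ] ℝ) → ((F × F) →L[ℝ] ℝ) := fun u₁ u₂ =>
      u₁.comp (ContinuousLinearMap.fst ℝ F F) + u₂.comp (ContinuousLinearMap.snd ℝ F F)
    -- `((Y,Q),(X,P)) ∈ R_ψ ↔ Y = ψ X ∧ ∀ a, P a = Q (fderiv ℝ ψ X a)`, applied to `ψ = Tφ`: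
    ((y, ydot) = Tφ (x, xdot) ∧
        ∀ a : E × E, LE pdot p a = LF qdot q (fderiv ℝ Tφ (x, xdot) a)) ↔
      (y = φ x ∧ (∀ a : E, p a = q (fderiv ℝ φ x a)) ∧ ydot = fderiv ℝ φ x xdot ∧
        ∀ a : E, pdot a = qdot (fderiv ℝ φ x a) +
          q (fderiv ℝ (fun z => fderiv ℝ φ z xdot) x a)) := by
  intro Tφ LE LF
  have hd : Differentiable ℝ φ := hφ.differentiable (by norm_num)
  have hd2 : Differentiable ℝ (fderiv ℝ φ) :=
    (hφ.fderiv_right (m := 1) (by norm_num)).differentiable (by norm_num)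
  have h1 : HasFDerivAt (fun v : E × E => φ v.1)
      ((fderiv ℝ φ x).comp (ContinuousLinearMap.fst ℝ E E)) (x, xdot) :=
    HasFDerivAt.comp (x, xdot) (g := φ) (hd x).hasFDerivAt hasFDerivAt_fst
  have h2 : HasFDerivAt (fun v : E × E => fderiv ℝ φ v.1)
      ((fderiv ℝ (fderiv ℝ φ) x).comp (ContinuousLinearMap.fst ℝ E E)) (x, xdot) :=
    HasFDerivAt.comp (x, xdot) (g := fderiv ℝ φ) (hd2 x).hasFDerivAt hasFDerivAt_fst
  have h3 := h2.clm_apply (hasFDerivAt_snd (𝕜 := ℝ) (p := (x, xdot)))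
  have h4 : fderiv ℝ Tφ (x, xdot) = _ := (h1.prodMk h3).fderiv
  have h5 : ∀ a, fderiv ℝ (fun z => fderiv ℝ φ z xdot) x a = fderiv ℝ (fderiv ℝ φ) x a xdot := by
    intro a
    have := ((hd2 x).hasFDerivAt.clm_apply (hasFDerivAt_const xdot x)).fderiv
    rw [this]
    simp
  have h6 : ∀ a b : E, fderiv ℝ Tφ (x, xdot) (a, b) =
      (fderiv ℝ φ x a, fderiv ℝ φ x b + fderiv ℝ (fderiv ℝ φ) x a xdot) := by
    intro a b
    rw [h4]
    simp
  have h7 : ∀ a b : E, (LE pdot p (a, b) = LF qdot q (fderiv ℝ Tφ (x, xdot) (a, b))) ↔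
      pdot a + p b = qdot (fderiv ℝ φ x a) +
        (q (fderiv ℝ φ x b) + q (fderiv ℝ (fderiv ℝ φ) x a xdot)) := by
    intro a b
    rw [h6]
    simp [LE, LF]
  simp only [Prod.forall, h7, h5]
  constructor
  · rintro ⟨h, H⟩
    obtain ⟨ha, hb⟩ := Prod.mk.inj h
    refine ⟨ha, fun a => ?_, hb, fun a => ?_⟩
    · simpa using H 0 a
    · simpa using H a 0
  · rintro ⟨ha, hp, hb, hpd⟩
    refine ⟨Prod.ext ha hb, fun a b => ?_⟩
    rw [hp, hpd]
    ring
end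

section
/- Let E, F be real normed vector spaces, Q := F →L[ℝ] ℝ, and S : E × Q → ℝ with ContDiff ℝ 2 S. Then for all x, ẋ ∈ E, q, q̇ ∈ Q, y, ẏ ∈ F, and p, ṗ ∈ E →L[ℝ] ℝ, the following two systems of equations are equivalent. System (I) (the relation generated by the time-derivative generating function Ṡ((x,ẋ),(q̇,q)) := fderiv ℝ S (x,q) (ẋ,q̇)): (i) fderiv ℝ S (x,q) (0,η) = η(y) for all η ∈ Q; (ii) fderiv ℝ (fun w => fderiv ℝ S w (ẋ,q̇)) (x,q) (0,η) = η(ẏ) for all η ∈ Q; (iii) fderiv ℝ (fun w => fderiv ℝ S w (ẋ,q̇)) (x,q) (a,0) = ṗ(a) for all a ∈ E; (iv) fderiv ℝ S (x,q) (b,0) = p(b) for all b ∈ E. System (II) (the tangent prolongation of the relation generated by S): (i') fderiv ℝ S (x,q) (0,η) = η(y) for all η ∈ Q; (ii') fderiv ℝ S (x,q) (b,0) = p(b) for all b ∈ E; (iii') fderiv ℝ (fun w => fderiv ℝ S w (0,η)) (x,q) (ẋ,q̇) = η(ẏ) for all η ∈ Q; (iv') fderiv ℝ (fun w => fderiv ℝ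 S w (a,0)) (x,q) (ẋ,q̇) = ṗ(a) for all a ∈ E. -/
/-- Flat version of the verification that for a thick morphism `Φ` with generating
function `S(x;q)`, the time-derivative generating function
`Ṡ((x,ẋ),(q̇,q)) = fderiv S (x,q) (ẋ,q̇)` generates exactly the tangent prolongation
`TΦ` of the Lagrangian relation generated by `S`.  System (I) consists of the
equations `y = ∂Ṡ/∂q̇`, `ẏ = ∂Ṡ/∂q`, `ṗ = ∂Ṡ/∂x`, `p = ∂Ṡ/∂ẋ` of the relation
generated by `Ṡ`; System (II) consists of the equations `y = ∂S/∂q`, `p = ∂S/∂x`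
of `Φ` at the base point together with their formal time derivatives. -/
theorem dot_generating_function_flat {E F : Type*}
    [NormedAddCommGroup E] [NormedSpace ℝ E]
    [NormedAddCommGroup F] [NormedSpace ℝ F]
    (S : E × (F →L[ℝ] ℝ) → ℝ) (hS : ContDiff ℝ 2 S)
    (x xdot : E) (q qdot : F →L[ℝ] ℝ) (y ydot : F) (p pdot : E →L[ℝ] ℝ) :
    -- System (I)
    ((∀ η : F →L[ℝ] ℝ, fderiv ℝ S (x, q) (0, η) = η y) ∧
     (∀ η : F →L[ℝ] ℝ,
        fderiv ℝ (fun w => fderiv ℝ S w (xdot, qdot)) (x, q) (0, η) = η ydot) ∧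
     (∀ a : E, fderiv ℝ (fun w => fderiv ℝ S w (xdot, qdot)) (x, q) (a, 0) = pdot a) ∧
     (∀ b : E, fderiv ℝ S (x, q) (b, 0) = p b)) ↔
    -- System (II)
    ((∀ η : F →L[ℝ] ℝ, fderiv ℝ S (x, q) (0, η) = η y) ∧
     (∀ b : E, fderiv ℝ S (x, q) (b, 0) = p b) ∧
     (∀ η : F →L[ℝ] ℝ,
        fderiv ℝ (fun w => fderiv ℝ S w (0, η)) (x, q) (xdot, qdot) = η ydot) ∧
     (∀ a : E, fderiv ℝ (fun w => fderiv ℝ S w (a, 0)) (x, q) (xdot, qdot) = pdot a)) := by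
  have hd : DifferentiableAt ℝ (fderiv ℝ S) (x, q) :=
    ((hS.fderiv_right (m := 1) (by norm_num)).differentiable (by norm_num)) (x, q)
  have hsymm : IsSymmSndFDerivAt ℝ S (x, q) :=
    hS.contDiffAt.isSymmSndFDerivAt (by simp)
  have key : ∀ v u : E × (F →L[ℝ] ℝ),
      fderiv ℝ (fun w => fderiv ℝ S w v) (x, q) u = fderiv ℝ (fderiv ℝ S) (x, q) u v := by
    intro v u
    have h := (hd.hasFDerivAt.clm_apply (hasFDerivAt_const v (x, q))).fderiv
    rw [h]
    simp
  have swap : ∀ v u : E × (F →L[ℝ] ℝ),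
      fderiv ℝ (fun w => fderiv ℝ S w v) (x, q) u
        = fderiv ℝ (fun w => fderiv ℝ S w u) (x, q) v := by
    intro v u
    rw [key, key]
    exact hsymm u v
  simp only [swap (xdot, qdot)]
  tauto
end

section
/- Let Z₁ and Z₂ be real vector spaces with bilinear forms ω₁ : Z₁ →ₗ[ℝ] Z₁ →ₗ[ℝ] ℝ and ω₂ : Z₂ →ₗ[ℝ] Z₂ →ₗ[ℝ] ℝ. Define the difference form Ω on Z₂ × Z₁ by Ω((z₂,z₁))((w₂,w₁)) := ω₂(z₂)(w₂) − ω₁(z₁)(w₁), the tangent lifts ω̇ᵢ on Zᵢ × Zᵢ by ω̇ᵢ((z,ż))((w,ẇ)) := ωᵢ(z)(ẇ) + ωᵢ(ż)(w), and the difference form Ω̇ on (Z₂ × Z₂) × (Z₁ × Z₁) by Ω̇((Z,W))((Z',W')) := ω̇₂(Z)(Z') − ω̇₁(W)(W'). Suppose R ⊆ Z₂ × Z₁ is a submodule that is Lagrangian with respect to Ω, i.e., R = {v ∈ Z₂ × Z₁ | ∀ u ∈ R, Ω(u)(v) = 0}. Then the submodule TR := {((z₂,ż₂),(z₁,ż₁))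 ∈ (Z₂ × Z₂) × (Z₁ × Z₁) | (z₂,z₁) ∈ R ∧ (ż₂,ż₁) ∈ R} is Lagrangian with respect to Ω̇. -/
/-- Flat linear model of the statement that the tangent prolongation `TΦ` of a thick
morphism `Φ` (a Lagrangian submanifold of `T*M₂ × (−T*M₁)`) is again a canonical
relation, i.e., Lagrangian in `T(T*M₂) × (−T(T*M₁))`: if a subspace `R ⊆ Z₂ × Z₁`
is Lagrangian for the difference form `Ω = ω₂ ⊖ ω₁`, then its tangent prolongation
`TR = {((z₂,ż₂),(z₁,ż₁)) | (z₂,z₁) ∈ R ∧ (ż₂,ż₁) ∈ R}` is Lagrangian for the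
difference `Ω̇` of the tangent-lift forms `ω̇ᵢ`. -/
theorem tangent_prolongation_lagrangian_flat {Z₁ Z₂ : Type*}
    [AddCommGroup Z₁] [Module ℝ Z₁] [AddCommGroup Z₂] [Module ℝ Z₂]
    (ω₁ : Z₁ →ₗ[ℝ] Z₁ →ₗ[ℝ] ℝ) (ω₂ : Z₂ →ₗ[ℝ] Z₂ →ₗ[ℝ] ℝ)
    (R : Submodule ℝ (Z₂ × Z₁))
    -- `R` is Lagrangian with respect to `Ω((z₂,z₁))((w₂,w₁)) = ω₂(z₂)(w₂) − ω₁(z₁)(w₁)`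
    (hR : ∀ v : Z₂ × Z₁, v ∈ R ↔ ∀ u ∈ R, ω₂ u.1 v.1 - ω₁ u.2 v.2 = 0) :
    let ωdot₂ : Z₂ × Z₂ → Z₂ × Z₂ → ℝ := fun z w => ω₂ z.1 w.2 + ω₂ z.2 w.1
    let ωdot₁ : Z₁ × Z₁ → Z₁ × Z₁ → ℝ := fun z w => ω₁ z.1 w.2 + ω₁ z.2 w.1
    let Ωdot : (Z₂ × Z₂) × (Z₁ × Z₁) → (Z₂ × Z₂) × (Z₁ × Z₁) → ℝ :=
      fun Zv Wv => ωdot₂ Zv.1 Wv.1 - ωdot₁ Zv.2 Wv.2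
    -- `TR = {((z₂,ż₂),(z₁,ż₁)) | (z₂,z₁) ∈ R ∧ (ż₂,ż₁) ∈ R}` is Lagrangian for `Ω̇`
    ∀ v : (Z₂ × Z₂) × (Z₁ × Z₁),
      ((v.1.1, v.2.1) ∈ R ∧ (v.1.2, v.2.2) ∈ R) ↔
        ∀ u : (Z₂ × Z₂) × (Z₁ × Z₁),
          ((u.1.1, u.2.1) ∈ R ∧ (u.1.2, u.2.2) ∈ R) → Ωdot u v = 0 := by
  intro ωdot₂ ωdot₁ Ωdot v
  constructor
  · rintro ⟨h1, h2⟩ u ⟨k1, k2⟩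
    have a := (hR _).1 h1 _ k2
    have b := (hR _).1 h2 _ k1
    simp only [Ωdot, ωdot₁, ωdot₂]
    simp only at a b
    linarith
  · intro h
    constructor
    · refine (hR _).2 fun u hu => ?_
      have a := h ((0, u.1), (0, u.2)) ⟨R.zero_mem, hu⟩
      simpa [Ωdot, ωdot₁, ωdot₂] using a
    · refine (hR _).2 fun u hu => ?_
      have a := h ((u.1, 0), (u.2, 0)) ⟨hu, R.zero_mem⟩
      simpa [Ωdot, ωdot₁, ωdot₂] using a
end
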